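/- arXiv:2106.03726 — 4 statements merged into one kernel-verified Lean document; each statement's English description precedes it below -/
import Mathlib

section
/- Let d ≥ 3 and let q_1, …, q_d be pairwise coprime positive integers. If a Γ-periodic potential V : ℤ^d → ℝ and the zero potential are Fermi isospectral, then V is identically zero. -/
open scoped BigOperators
open Complex

noncomputable section

/-- The fundamental domain `W` for `Γ = q₁ℤ ⊕ ⋯ ⊕ q_dℤ`, as a type. -/
abbrev Cell (d : ℕ) (q : Fin d → ℕ) := (j : Fin d) → Fin (q j)

/-- `V : ℤ^d → ℝ` is `Γ`-periodic for `Γ = q₁ℤ ⊕ ⋯ ⊕ q_dℤ`. -/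
def IsPeriodicPotential (d : ℕ) (q : Fin d → ℕ) (V : (Fin d → ℤ) → ℝ) : Prop :=
  ∀ n γ : Fin d → ℤ, (∀ j, (q j : ℤ) ∣ γ j) → V (n + γ) = V n

/-- The discrete Fourier transform `V̂(l)`, defined for all `l ∈ ℤ^d`
(it is automatically `Γ`-periodic in `l`). -/
def dft (d : ℕ) (q : Fin d → ℕ) (V : (Fin d → ℤ) → ℝ) (l : Fin d → ℤ) : ℂ :=
  (1 / ∏ j, (q j : ℂ)) *
    ∑ n : Cell d q, (V (fun j => ((n j : ℕ) : ℤ)) : ℂ) *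
      Complex.exp (-(2 * Real.pi * Complex.I) * ∑ j, (l j : ℂ) * ((n j : ℕ) : ℂ) / (q j : ℂ))

/-- `ρ^j_m = e^{2πi m/q_j}`. -/
def rho (d : ℕ) (q : Fin d → ℕ) (j : Fin d) (m : ℤ) : ℂ :=
  Complex.exp (2 * Real.pi * Complex.I * (m : ℂ) / (q j : ℂ))

/-- The Floquet matrix `M_V(z)` (the matrix `A + B_V` of Lemma 2.7). -/
def floquetMatrix (d : ℕ) (q : Fin d → ℕ) (V : (Fin d → ℤ) → ℝ) (z : Fin d → ℂ) :
    Matrix (Cell d q) (Cell d q) ℂ := fun n n' =>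
  (if n = n' then ∑ j, (rho d q j (n j : ℕ) * z j + (rho d q j (n j : ℕ) * z j)⁻¹) else 0)
    + dft d q V (fun j => ((n j : ℕ) : ℤ) - ((n' j : ℕ) : ℤ))

/-- `P̃_V(z, λ) = det (M_V(z) − λ I)`. -/
def floquetDet (d : ℕ) (q : Fin d → ℕ) (V : (Fin d → ℤ) → ℝ) (z : Fin d → ℂ) (lam : ℂ) : ℂ :=
  Matrix.det (floquetMatrix d q V z - lam • (1 : Matrix (Cell d q) (Cell d q) ℂ))

/-- `V` and `Y` are Fermi isospectral. -/
def FermiIsospectral (d : ℕ) (q : Fin d → ℕ) (V Y : (Fin d → ℤ) → ℝ) : Prop :=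
  ∃ lam0 : ℂ,
    {z : Fin d → ℂ | (∀ j, z j ≠ 0) ∧ floquetDet d q V z lam0 = 0}
      = {z : Fin d → ℂ | (∀ j, z j ≠ 0) ∧ floquetDet d q Y z lam0 = 0}

/-- `V` and `Y` are Floquet isospectral. -/
def FloquetIsospectral (d : ℕ) (q : Fin d → ℕ) (V Y : (Fin d → ℤ) → ℝ) : Prop :=
  ∀ z : Fin d → ℂ, (∀ j, z j ≠ 0) → ∀ lam : ℂ,
    floquetDet d q V z lam = floquetDet d q Y z lam

/-- The average `[V]` of `V` over one periodicity cell. -/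
def potentialAvg (d : ℕ) (q : Fin d → ℕ) (V : (Fin d → ℤ) → ℝ) : ℝ :=
  (1 / ∏ j, (q j : ℝ)) * ∑ n : Cell d q, V (fun j => ((n j : ℕ) : ℤ))

/-- The embedding of the `j`-th block of coordinates into `Fin d`,
given block sizes `D : Fin r → ℕ` with `∑ j, D j = d`. -/
def blockEmbed {r d : ℕ} (D : Fin r → ℕ) (hsum : ∑ j, D j = d) (j : Fin r) (i : Fin (D j)) :
    Fin d :=
  ⟨(∑ k ∈ Finset.univ.filter (fun k => k < j), D k) + i.1, by
    have hj : j ∉ Finset.univ.filter (fun k => k < j) := by simp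
    have h2 : (∑ k ∈ Finset.univ.filter (fun k => k < j), D k) + D j ≤ ∑ k, D k := by
      calc (∑ k ∈ Finset.univ.filter (fun k => k < j), D k) + D j
          = ∑ k ∈ insert j (Finset.univ.filter (fun k => k < j)), D k := by
            rw [Finset.sum_insert hj, add_comm]
        _ ≤ ∑ k, D k := Finset.sum_le_sum_of_subset (Finset.subset_univ _)
    have h3 := i.2
    omega⟩

/-- `V` is `(D 0, …, D (r-1))` separable. -/
def IsSeparablePotential {r : ℕ} (d : ℕ) (D : Fin r → ℕ) (hsum : ∑ j, D j = d)
    (V : (Fin d → ℤ) → ℝ) : Prop :=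
  ∃ Vj : (j : Fin r) → (Fin (D j) → ℤ) → ℝ,
    ∀ n : Fin d → ℤ, V n = ∑ j, Vj j (fun i => n (blockEmbed D hsum j i))



lemma aux_growth (p r : ℂ) (hr : r ≠ 0) (C : ℝ) (H : ℕ → ℂ)
    (hH : ∀ᶠ n : ℕ in Filter.atTop, ‖H n - ((n:ℂ)^2 * p + n * r)‖ ≤ C) :
    Filter.Tendsto (fun n : ℕ => (n:ℂ) / H n) Filter.atTop (nhds (if p = 0 then r⁻¹ else 0)) ∧
    Filter.Tendsto (fun n : ℕ => (H n)⁻¹) Filter.atTop (nhds 0) ∧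
    ∀ᶠ n : ℕ in Filter.atTop, H n ≠ 0 := by
  have hinv : Filter.Tendsto (fun n : ℕ => ((n:ℂ))⁻¹) Filter.atTop (nhds 0) :=
    tendsto_inv_atTop_nhds_zero_nat (𝕜 := ℂ)
  have hR : Filter.Tendsto (fun n : ℕ => (n:ℂ)⁻¹ * (H n - ((n:ℂ)^2 * p + n * r)))
      Filter.atTop (nhds 0) := by
    refine hinv.zero_mul_isBoundedUnder_le ⟨C, ?_⟩
    simpa [Filter.eventually_map] using hH
  have hpos : ∀ᶠ n : ℕ in Filter.atTop, (n:ℂ) ≠ 0 := by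
    filter_upwards [Filter.eventually_gt_atTop 0] with n hn
    exact_mod_cast hn.ne'
  by_cases hp : p = 0
  · have h1 : Filter.Tendsto (fun n : ℕ => H n / n) Filter.atTop (nhds r) := by
      have : Filter.Tendsto (fun n : ℕ => (n:ℂ)⁻¹ * (H n - ((n:ℂ)^2 * p + n * r)) + r)
        Filter.atTop (nhds (0 + r)) := hR.add_const r
      rw [zero_add] at this
      refine this.congr' ?_
      filter_upwards [hpos] with n hn
      subst hp
      field_simp
      ring
    have h2 : Filter.Tendsto (fun n : ℕ => (n:ℂ) / H n) Filter.atTop (nhds r⁻¹) := by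
      simpa using h1.inv₀ hr
    refine ⟨by simpa [hp] using h2, ?_, ?_⟩
    · have := h2.mul hinv
      rw [mul_zero] at this
      refine this.congr' ?_
      filter_upwards [hpos] with n hn
      rw [div_mul_eq_mul_div, mul_inv_cancel₀ hn, one_div]
    · filter_upwards [h1.eventually_ne hr] with n hn h0
      simp [h0] at hn
  · have h1 : Filter.Tendsto (fun n : ℕ => H n / n * (n:ℂ)⁻¹) Filter.atTop (nhds p) := by
      have : Filter.Tendsto (fun n : ℕ => (n:ℂ)⁻¹ * ((n:ℂ)⁻¹ * (H n - ((n:ℂ)^2 * p + n * r)))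
         + (n:ℂ)⁻¹ * r + p)
        Filter.atTop (nhds (0 * 0 + 0 * r + p)) :=
          ((hinv.mul hR).add (hinv.mul_const r)).add_const p
      simp only [zero_mul, zero_add] at this
      refine this.congr' ?_
      filter_upwards [hpos] with n hn
      field_simp
      ring
    have h2 : Filter.Tendsto (fun n : ℕ => (n:ℂ) / H n) Filter.atTop (nhds 0) := by
      have := (h1.inv₀ hp).mul hinv
      rw [mul_zero] at this
      refine this.congr' ?_
      filter_upwards [hpos] with n hn
      simp only [mul_inv, inv_div, inv_inv]
      field_simp
    refine ⟨by simpa [hp] using h2, ?_, ?_⟩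
    · have := h2.mul hinv
      rw [mul_zero] at this
      refine this.congr' ?_
      filter_upwards [hpos] with n hn
      rw [div_mul_eq_mul_div, mul_inv_cancel₀ hn, one_div]
    · filter_upwards [h1.eventually_ne hp] with n hn h0
      simp [h0] at hn

lemma aux_root (E : ℂ) : ∃ x : ℂ, 1 ≤ ‖x‖ ∧ x + x⁻¹ = E := by
  obtain ⟨s, hs⟩ := IsAlgClosed.exists_pow_nat_eq (E^2 - 4) (n := 2) (by norm_num)
  have hprod : ((E + s)/2) * ((E - s)/2) = 1 := by linear_combination -hs/4
  have key : ∀ x y : ℂ, x * y = 1 → x + y = E → 1 ≤ ‖x‖ → ∃ x : ℂ, 1 ≤ ‖x‖ ∧ x + x⁻¹ = E := by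
    intro x y hxy hs hx
    exact ⟨x, hx, by rw [← eq_inv_of_mul_eq_one_right hxy]; exact hs⟩
  rcases le_total 1 ‖(E+s)/2‖ with h | h
  · exact key _ _ hprod (by ring) h
  · refine key ((E - s)/2) ((E+s)/2) (by rw [mul_comm]; exact hprod) (by ring) ?_
    by_contra h'
    push Not at h'
    have := congrArg norm hprod
    rw [norm_mul, norm_one] at this
    nlinarith [norm_nonneg ((E+s)/2), norm_nonneg ((E-s)/2)]

lemma aux_point {d : ℕ} (j0 : Fin d) (lam : ℂ) (y : Fin d → ℂ) (hy : ∑ j, y j = 0)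
    (hy1 : ∀ j, 1 ≤ ‖y j‖) : ∃ z : Fin d → ℂ, (∀ j, z j ≠ 0) ∧ ∑ j, (z j + (z j)⁻¹) = lam ∧
      ∀ w : Fin d → ℂ, (∀ j, ‖w j‖ = 1) →
        ‖(∑ j, (w j * z j + (w j * z j)⁻¹) - lam) - ∑ j, w j * y j‖ ≤ 2 * ‖lam‖ + 2 * d := by
  obtain ⟨x, hx1, hx⟩ := aux_root (lam - ∑ j ∈ Finset.univ.erase j0, (y j + (y j)⁻¹))
  set z := Function.update y j0 x with hz
  have hz0 : z j0 = x := by simp [hz]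
  have hzj : ∀ j, j ≠ j0 → z j = y j := fun j hj => by simp [hz, hj]
  have hz1 : ∀ j, 1 ≤ ‖z j‖ := by
    intro j
    by_cases h : j = j0
    · rw [h, hz0]; exact hx1
    · rw [hzj j h]; exact hy1 j
  have hzi : ∀ j, ‖(z j)⁻¹‖ ≤ 1 := fun j => by
    rw [norm_inv]; exact inv_le_one_of_one_le₀ (hz1 j)
  have hsum : ∑ j, (z j + (z j)⁻¹) = lam := by
    rw [← Finset.add_sum_erase _ _ (Finset.mem_univ j0), hz0, hx,
      Finset.sum_congr rfl (fun j hj => by rw [← hzj j (Finset.ne_of_mem_erase hj)])]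
    ring
  have hdiff : ∀ w : Fin d → ℂ, ∑ j, w j * z j - ∑ j, w j * y j = w j0 * (z j0 - y j0) := by
    intro w
    rw [← Finset.add_sum_erase _ _ (Finset.mem_univ j0),
      ← Finset.add_sum_erase _ (fun j => w j * y j) (Finset.mem_univ j0),
      Finset.sum_congr rfl (fun j hj => by rw [hzj j (Finset.ne_of_mem_erase hj)])]
    ring
  have hI : ∀ w : Fin d → ℂ, (∀ j, ‖w j‖ = 1) → ‖∑ j, (w j * z j)⁻¹‖ ≤ d := by
    intro w hw
    calc _ ≤ ∑ j : Fin d, (1:ℝ) := norm_sum_le_of_le _ (fun j _ => by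
          rw [mul_inv, norm_mul, norm_inv, hw]; simpa using hzi j)
      _ = d := by simp
  have hb : ‖z j0 - y j0‖ ≤ ‖lam‖ + d := by
    have h1 := hdiff (fun _ => 1)
    simp only [one_mul, hy, sub_zero] at h1
    rw [← h1]
    have h2 : ∑ j, z j = lam - ∑ j, (z j)⁻¹ := by
      rw [← hsum, Finset.sum_add_distrib]; ring
    rw [h2]
    refine (norm_sub_le _ _).trans ?_
    have := hI (fun _ => 1) (by simp)
    simp only [one_mul] at this
    linarith
  refine ⟨z, fun j h => ?_, hsum, fun w hw => ?_⟩
  · have := hz1 j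
    rw [h] at this; simp at this; linarith
  · have : (∑ j, (w j * z j + (w j * z j)⁻¹) - lam) - ∑ j, w j * y j
      = w j0 * (z j0 - y j0) + ∑ j, (w j * z j)⁻¹ - lam := by
      rw [← hdiff, Finset.sum_add_distrib]; ring
    rw [this]
    refine (norm_sub_le _ _).trans ?_
    have h3 := norm_add_le (w j0 * (z j0 - y j0)) (∑ j, (w j * z j)⁻¹)
    rw [norm_mul, hw, one_mul] at h3
    linarith [hI w hw]

lemma aux_det {ι : Type*} [Fintype ι] [DecidableEq ι] (o : ι) (L : Matrix ι ι ℂ)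
    (hL : ∀ m m', m ≠ o → m' ≠ o → L m m' = if m = m' then 1 else 0) (hdet : L.det = 0) :
    L o o - ∑ m ∈ Finset.univ.erase o, L o m * L m o = 0 := by
  obtain ⟨u, hu0, hu⟩ := Matrix.exists_vecMul_eq_zero_iff.mpr hdet
  have hcol : ∀ m', u o * L o m' + ∑ m ∈ Finset.univ.erase o, u m * L m m' = 0 := by
    intro m'
    have := congrFun hu m'
    rw [Finset.add_sum_erase _ (fun m => u m * L m m') (Finset.mem_univ o)]
    simpa [Matrix.vecMul, dotProduct] using this
  have hm : ∀ m', m' ≠ o → u m' = - (u o * L o m') := by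
    intro m' hm'
    have h := hcol m'
    rw [Finset.sum_eq_single m'] at h
    · rw [hL m' m' hm' hm'] at h
      simp at h
      linear_combination h
    · intro b hb hne
      rw [hL b m' (Finset.ne_of_mem_erase hb) hm']; simp [hne]
    · intro h; simp [hm'] at h
  have huo : u o ≠ 0 := by
    intro h
    apply hu0
    funext m
    by_cases hmo : m = o
    · rw [hmo, h]; rfl
    · rw [hm m hmo, h]; simp
  have h := hcol o
  rw [Finset.sum_congr rfl (fun m hm' => by rw [hm m (Finset.ne_of_mem_erase hm')])] at h
  apply mul_left_cancel₀ huo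
  rw [mul_zero, ← h, mul_sub, Finset.mul_sum, sub_eq_add_neg, ← Finset.sum_neg_distrib]
  congr 1
  exact Finset.sum_congr rfl (fun _ _ => by ring)

lemma aux_key {ι : Type*} [Fintype ι] [DecidableEq ι] (o : ι) (B : Matrix ι ι ℂ)
    (D : ℕ → ι → ℂ) (γ : ι → ℂ)
    (hDo : ∀ᶠ n in Filter.atTop, D n o = 0)
    (hD : ∀ m, m ≠ o → ∀ᶠ n in Filter.atTop, D n m ≠ 0)
    (hD' : ∀ m, m ≠ o → Filter.Tendsto (fun n => (D n m)⁻¹) Filter.atTop (nhds 0))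
    (hγ : ∀ m, m ≠ o → Filter.Tendsto (fun n : ℕ => (n:ℂ) / D n m) Filter.atTop (nhds (γ m)))
    (hdet : ∀ᶠ n in Filter.atTop, (Matrix.diagonal (D n) + B).det = 0) :
    B o o = 0 ∧ ∑ m ∈ Finset.univ.erase o, B o m * (γ m * B m o) = 0 := by
  have hDall : ∀ᶠ n in Filter.atTop, ∀ m, m ≠ o → D n m ≠ 0 := by
    rw [Filter.eventually_all]
    intro m
    by_cases h : m = o
    · simp [h]
    · simpa [h] using hD m h
  have gen : ∀ (k : ℕ → ℂ) (L : Matrix ι ι ℂ),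
      Filter.Tendsto (fun n => Matrix.diagonal (fun m => if m = o then 1 else (D n m)⁻¹) *
        (Matrix.diagonal (D n) + B) * Matrix.diagonal (fun m => if m = o then k n else 1))
        Filter.atTop (nhds L) → L.det = 0 := by
    intro k L hL
    have h1 := ((Continuous.matrix_det continuous_id).tendsto L).comp hL
    refine tendsto_nhds_unique h1 (tendsto_const_nhds.congr' ?_)
    filter_upwards [hdet] with n hn
    simp [Matrix.det_mul, hn]
  have h0 : B o o = 0 := by
    have h := aux_det o (Matrix.of fun m m' => if m = o then B o m' else if m = m' then 1 else 0)
      (by intro m m' h1 h2; simp [h1]) (gen (fun _ => 1) _ ?_)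
    · rw [Finset.sum_eq_zero] at h
      · simpa using h
      · intro m hm
        have := Finset.ne_of_mem_erase hm
        simp [this]
    · refine tendsto_pi_nhds.2 fun m => tendsto_pi_nhds.2 fun m' => ?_
      simp only [Matrix.mul_diagonal, Matrix.diagonal_mul, Matrix.add_apply, Matrix.of_apply]
      by_cases hm : m = o
      · subst hm
        refine tendsto_const_nhds.congr' ?_
        filter_upwards [hDo] with n hn
        by_cases h : m = m'
        · subst h; simp [hn]
        · simp [h]
      · have := ((hD' m hm).mul_const (B m m')).const_add (if m = m' then (1:ℂ) else 0)
        simp only [zero_mul, add_zero] at this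
        simp only [if_neg hm]
        refine this.congr' ?_
        filter_upwards [hD m hm] with n hn
        by_cases h : m = m'
        · subst h; simp [hn, mul_add]
        · simp [h]
  refine ⟨h0, ?_⟩
  have h := aux_det o (Matrix.of fun m m' => if m = o then B o m' else
      if m' = o then γ m * B m o else if m = m' then 1 else 0)
      (by intro m m' h1 h2; simp [h1, h2]) (gen (fun n => n) _ ?_)
  · rw [Finset.sum_congr rfl (g := fun m => B o m * (γ m * B m o))] at h
    · simpa [h0] using h
    · intro m hm
      have := Finset.ne_of_mem_erase hm
      simp [this]
  · refine tendsto_pi_nhds.2 fun m => tendsto_pi_nhds.2 fun m' => ?_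
    simp only [Matrix.mul_diagonal, Matrix.diagonal_mul, Matrix.add_apply, Matrix.of_apply]
    by_cases hm : m = o
    · subst hm
      refine tendsto_const_nhds.congr' ?_
      filter_upwards [hDo] with n hn
      by_cases h : m = m'
      · subst h; simp [hn, h0]
      · simp [h, Ne.symm h]
    · simp only [if_neg hm]
      by_cases hm' : m' = o
      · subst hm'
        simp only [if_true]
        refine ((hγ m hm).mul_const (B m m')).congr fun n => ?_
        simp [hm]; ring
      · simp only [if_neg hm']
        have := ((hD' m hm).mul_const (B m m')).const_add (if m = m' then (1:ℂ) else 0)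
        simp only [zero_mul, add_zero] at this
        refine this.congr' ?_
        filter_upwards [hD m hm] with n hn
        by_cases h : m = m'
        · subst h; simp [hn, mul_add]
        · simp [h]

lemma aux_core {d : ℕ} {ι : Type*} [Fintype ι] [DecidableEq ι] (j0 : Fin d)
    (w : ι → Fin d → ℂ) (hw : ∀ m j, ‖w m j‖ = 1) (o : ι) (ho : ∀ j, w o j = 1)
    (B : Matrix ι ι ℂ) (lam : ℂ)
    (hdet : ∀ z : Fin d → ℂ, (∀ j, z j ≠ 0) → ∑ j, (z j + (z j)⁻¹) = lam →
      (Matrix.diagonal (fun m => ∑ j, (w m j * z j + (w m j * z j)⁻¹) - lam) + B).det = 0)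
    (a a' : Fin d → ℂ) (ha : ∑ j, a j = 0) (ha' : ∑ j, a' j = 0) (ha0 : ∀ j, a' j ≠ 0)
    (hl : ∀ m, m ≠ o → ∑ j, w m j * a' j ≠ 0) :
    B o o = 0 ∧ ∑ m ∈ Finset.univ.erase o, B o m *
      ((if ∑ j, w m j * a j = 0 then (∑ j, w m j * a' j)⁻¹ else 0) * B m o) = 0 := by
  have hy : ∀ᶠ n : ℕ in Filter.atTop, ∀ j, 1 ≤ ‖(n:ℂ)^2 * a j + n * a' j‖ := by
    rw [Filter.eventually_all]
    intro j
    obtain ⟨-, h1, h2⟩ := aux_growth (a j) (a' j) (ha0 j) 0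
      (fun n => (n:ℂ)^2 * a j + n * a' j) (by simp)
    have h3 := h1.norm
    rw [norm_zero] at h3
    filter_upwards [h3.eventually_lt_const one_pos, h2] with n hn hn2
    rw [norm_inv] at hn
    exact ((inv_lt_one₀ (norm_pos_iff.2 hn2)).1 hn).le
  have hz : ∀ᶠ n : ℕ in Filter.atTop, ∃ z : Fin d → ℂ, (∀ j, z j ≠ 0) ∧
      ∑ j, (z j + (z j)⁻¹) = lam ∧ ∀ w : Fin d → ℂ, (∀ j, ‖w j‖ = 1) →
        ‖(∑ j, (w j * z j + (w j * z j)⁻¹) - lam) -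
          ∑ j, w j * ((n:ℂ)^2 * a j + n * a' j)‖ ≤ 2 * ‖lam‖ + 2 * d := by
    filter_upwards [hy] with n hn
    refine aux_point j0 lam _ ?_ hn
    rw [Finset.sum_add_distrib, ← Finset.mul_sum, ← Finset.mul_sum, ha, ha']; simp
  obtain ⟨z, hz⟩ := Filter.skolem.1 hz
  have hg : ∀ m, m ≠ o → _ := fun m hm => aux_growth (∑ j, w m j * a j) (∑ j, w m j * a' j)
    (hl m hm) (2 * ‖lam‖ + 2 * d)
    (fun n => ∑ j, (w m j * z n j + (w m j * z n j)⁻¹) - lam) (by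
      filter_upwards [hz] with n hn
      have := hn.2.2 (w m) (hw m)
      convert this using 3
      rw [Finset.mul_sum, Finset.mul_sum, ← Finset.sum_add_distrib]
      exact Finset.sum_congr rfl (fun _ _ => by ring))
  refine aux_key o B (fun n m => ∑ j, (w m j * z n j + (w m j * z n j)⁻¹) - lam) _ ?_
    (fun m hm => (hg m hm).2.2) (fun m hm => (hg m hm).2.1) (fun m hm => (hg m hm).1) ?_
  · filter_upwards [hz] with n hn
    simp [ho, hn.2.1]
  · filter_upwards [hz] with n hn
    exact hdet _ hn.1 hn.2.1

lemma aux_generic {d : ℕ} {ι : Type*} [Finite ι] (K : Submodule ℂ (Fin d → ℂ))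
    (w : ι → Fin d → ℂ) :
    ∃ a ∈ K, ∀ m, (∑ j, w m j * a j = 0) → ∀ v ∈ K, ∑ j, w m j * v j = 0 := by
  classical
  let S := {m : ι // ∃ v ∈ K, ∑ j, w m j * v j ≠ 0}
  obtain ⟨a, ha, h⟩ := Module.Dual.exists_forall_mem_ne_zero_of_forall_exists K
    (fun m : S => (Fintype.linearCombination ℂ (w m.1) : (Fin d → ℂ) →ₗ[ℂ] ℂ)) (by
      rintro ⟨m, v, hv, hne⟩
      exact ⟨v, hv, by simpa [Fintype.linearCombination_apply, mul_comm] using hne⟩)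
  refine ⟨a, ha, fun m hm v hv => ?_⟩
  by_contra hne
  apply h ⟨m, v, hv, hne⟩
  simpa [Fintype.linearCombination_apply, mul_comm] using hm

lemma aux_span {d : ℕ} (u w' : Fin d → ℂ)
    (h : ∀ v : Fin d → ℂ, ∑ j, v j = 0 → ∑ j, u j * v j = 0 → ∑ j, w' j * v j = 0) :
    ∃ α β : ℂ, ∀ j, w' j = α + β * u j := by
  have := mem_span_of_iInf_ker_le_ker (𝕜 := ℂ)
    (L := ![(Fintype.linearCombination ℂ (fun _ => 1) : (Fin d → ℂ) →ₗ[ℂ] ℂ),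
      Fintype.linearCombination ℂ u]) (K := Fintype.linearCombination ℂ w') (by
      intro v hv
      simp only [Submodule.mem_iInf, LinearMap.mem_ker] at hv ⊢
      have h0 := hv 0
      have h1 := hv 1
      simp [Fintype.linearCombination_apply, mul_comm] at h0 h1 ⊢
      simpa [mul_comm] using h v h0 (by simpa [mul_comm] using h1))
  obtain ⟨c, hc⟩ := (Submodule.mem_span_range_iff_exists_fun ℂ).1 this
  refine ⟨c 0, c 1, fun j => ?_⟩
  have := LinearMap.congr_fun hc (Pi.single j 1)
  simp [Fin.sum_univ_two] at this
  exact this.symm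

lemma aux_three (α β x y t : ℂ) (hx : ‖x‖ = 1) (hy : ‖y‖ = 1) (ht : ‖t‖ = 1)
    (hxy : x ≠ y) (hxt : x ≠ t) (hyt : y ≠ t) (h1 : ‖α + β * x‖ = 1)
    (h2 : ‖α + β * y‖ = 1) (h3 : ‖α + β * t‖ = 1) (hβ : β ≠ 0) : α = 0 := by
  have nc : ∀ x : ℂ, ‖x‖ = 1 → x * (starRingEnd ℂ) x = 1 := by
    intro x hx
    rw [Complex.mul_conj, Complex.normSq_eq_norm_sq, hx]; simp
  have e1 := nc _ h1
  have e2 := nc _ h2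
  have e3 := nc _ h3
  have f1 := nc _ hx
  have f2 := nc _ hy
  have f3 := nc _ ht
  simp only [map_add, map_mul] at e1 e2 e3
  generalize (starRingEnd ℂ) x = x' at *
  generalize (starRingEnd ℂ) y = y' at *
  generalize (starRingEnd ℂ) t = t' at *
  set α' := (starRingEnd ℂ) α with hα'
  set β' := (starRingEnd ℂ) β
  have hx0 : x ≠ 0 := left_ne_zero_of_mul_eq_one f1
  have g1 : α' * β * x * y = α * β' := by
    apply mul_left_cancel₀ (sub_ne_zero.2 hxy)
    linear_combination (e1 - e2) * x * y - β * β' * (f1 - f2) * x * y - α * β' * (f1 * y - f2 * x)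
  have g2 : α' * β * x * t = α * β' := by
    apply mul_left_cancel₀ (sub_ne_zero.2 hxt)
    linear_combination (e1 - e3) * x * t - β * β' * (f1 - f3) * x * t - α * β' * (f1 * t - f3 * x)
  have g3 : α' * β * x * (y - t) = 0 := by linear_combination g1 - g2
  have : α' = 0 := by
    simpa [hβ, hx0, sub_ne_zero.2 hyt] using g3
  simpa [hα'] using this

lemma aux_coprime {x : ℂ} {a b : ℕ} (h : Nat.Coprime a b) (ha : x ^ a = 1) (hb : x ^ b = 1) :
    x = 1 := by
  have h1 := Nat.dvd_gcd (orderOf_dvd_of_pow_eq_one ha) (orderOf_dvd_of_pow_eq_one hb)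
  rw [h, Nat.dvd_one, orderOf_eq_one_iff] at h1
  exact h1

lemma aux_re (x : ℂ) (hx : ‖x‖ = 1) (h1 : x ≠ 1) : ((x - 1)⁻¹).re = -1/2 := by
  have h2 : x.re ^ 2 + x.im ^ 2 = 1 := by
    have := Complex.sq_norm x
    rw [hx, Complex.normSq_apply] at this
    nlinarith
  have h3 : Complex.normSq (x - 1) = 2 * (1 - x.re) := by
    rw [Complex.normSq_apply]; simp; nlinarith
  have h4 : Complex.normSq (x - 1) ≠ 0 := by
    rw [Ne, Complex.normSq_eq_zero, sub_eq_zero]; exact h1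
  rw [Complex.inv_re, div_eq_iff h4, h3]
  simp; ring

lemma aux_main {d : ℕ} (hd : 3 ≤ d) {ι : Type*} [Fintype ι] [DecidableEq ι]
    (q : Fin d → ℕ) (hco : ∀ i j : Fin d, i ≠ j → Nat.Coprime (q i) (q j))
    (w : ι → Fin d → ℂ) (hw : ∀ m j, ‖w m j‖ = 1) (hwq : ∀ m j, w m j ^ q j = 1)
    (hinj : ∀ m m', (∀ j, w m j = w m' j) → m = m')
    (o : ι) (ho : ∀ j, w o j = 1)
    (B : Matrix ι ι ℂ) (lam : ℂ)
    (hdet : ∀ z : Fin d → ℂ, (∀ j, z j ≠ 0) → ∑ j, (z j + (z j)⁻¹) = lam →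
      (Matrix.diagonal (fun m => ∑ j, (w m j * z j + (w m j * z j)⁻¹) - lam) + B).det = 0)
    (c : ι → ℝ) (hc0 : ∀ m, 0 ≤ c m) (hc : ∀ m, B o m * B m o = c m) :
    B o o = 0 ∧ ∀ m, m ≠ o → c m = 0 := by
  have hco2 : ∀ m i j, i ≠ j → w m i = w m j → w m i = 1 := by
    intro m i j hij h
    exact aux_coprime (hco i j hij) (hwq m i) (by rw [h]; exact hwq m j)
  have hex : ∀ m, m ≠ o → ∃ i j, w m i ≠ w m j := by
    intro m hm
    by_contra! h
    apply hm
    apply hinj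
    intro j
    rw [ho]
    obtain ⟨i, hi⟩ : ∃ i : Fin d, i ≠ j := by
      have : Nontrivial (Fin d) := Fin.nontrivial_iff_two_le.2 (by omega)
      exact exists_ne j
    exact hco2 m j i hi.symm (h j i)
  -- the hyperplane
  let H : Submodule ℂ (Fin d → ℂ) :=
    LinearMap.ker (Fintype.linearCombination ℂ (fun _ => (1:ℂ)) : (Fin d → ℂ) →ₗ[ℂ] ℂ)
  have hH : ∀ v, v ∈ H ↔ ∑ j, v j = 0 := by
    intro v; simp [H, Fintype.linearCombination_apply]
  have hdiff : ∀ i j : Fin d, (Pi.single i (1:ℂ) - Pi.single j 1 : Fin d → ℂ) ∈ H := by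
    intro i j; rw [hH]; simp
  have hdiff2 : ∀ (u : Fin d → ℂ) (i j : Fin d),
      ∑ k, u k * (Pi.single i (1:ℂ) - Pi.single j 1 : Fin d → ℂ) k = u i - u j := by
    intro u i j; simp [mul_sub, Pi.single_apply]
  obtain ⟨a', ha', hgen⟩ := aux_generic H (Sum.elim w (fun i : Fin d => Pi.single i (1:ℂ)))
  have ha0 : ∀ j, a' j ≠ 0 := by
    intro j hj
    obtain ⟨i, hi⟩ : ∃ i : Fin d, i ≠ j := by
      have : Nontrivial (Fin d) := Fin.nontrivial_iff_two_le.2 (by omega)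
      exact exists_ne j
    have := hgen (Sum.inr j) (by simp [Pi.single_apply, hj]) _ (hdiff j i)
    rw [hdiff2] at this
    simp [hi] at this
  have hl : ∀ m, m ≠ o → ∑ j, w m j * a' j ≠ 0 := by
    intro m hm h0
    obtain ⟨i, j, hij⟩ := hex m hm
    have := hgen (Sum.inl m) h0 _ (hdiff i j)
    rw [hdiff2] at this
    exact hij (sub_eq_zero.1 this)
  have core := fun a ha => aux_core ⟨0, by omega⟩ w hw o ho B lam hdet a a' ha ((hH _).1 ha') ha0 hl
  refine ⟨(core 0 (by simp)).1, fun m0 hm0 => ?_⟩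
  let K : Submodule ℂ (Fin d → ℂ) := H ⊓
    LinearMap.ker (Fintype.linearCombination ℂ (w m0) : (Fin d → ℂ) →ₗ[ℂ] ℂ)
  have hK : ∀ v, v ∈ K ↔ ∑ j, v j = 0 ∧ ∑ j, w m0 j * v j = 0 := by
    intro v; simp [K, hH, Fintype.linearCombination_apply, mul_comm]
  obtain ⟨a, ha, hagen⟩ := aux_generic K w
  have hsum := (core a ((hK _).1 ha).1).2
  have hspan : ∀ m, ∑ j, w m j * a j = 0 → ∃ α β : ℂ, ∀ j, w m j = α + β * w m0 j := by
    intro m hm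
    exact aux_span _ _ (fun v h1 h2 => hagen m hm v ((hK v).2 ⟨h1, h2⟩))
  have hβ : ∀ m, m ≠ o → ∀ α β : ℂ, (∀ j, w m j = α + β * w m0 j) → β ≠ 0 := by
    rintro m hm α β h rfl
    obtain ⟨i, j, hij⟩ := hex m hm
    exact hij (by rw [h, h]; ring)
  have hm0a : ∑ j, w m0 j * a j = 0 := ((hK _).1 ha).2
  obtain ⟨i, hi⟩ : ∃ i, w m0 i ≠ 1 := by
    by_contra! h
    exact hm0 (hinj _ _ (fun j => by rw [h, ho]))
  by_cases hcase : ∃ j, j ≠ i ∧ w m0 j ≠ 1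
  · obtain ⟨j, hji, hj⟩ := hcase
    obtain ⟨k, hk⟩ : ∃ k : Fin d, k ∉ ({i, j} : Finset (Fin d)) := by
      by_contra! h
      have h1 : (Finset.univ : Finset (Fin d)) ⊆ {i, j} := fun k _ => h k
      have h2 := (Finset.card_le_card h1).trans Finset.card_le_two
      simp at h2; omega
    simp at hk
    have hne : ∀ m, m ≠ o → m ≠ m0 → ∑ j, w m j * a j ≠ 0 := by
      intro m hm hmm h0
      obtain ⟨α, β, h⟩ := hspan m h0
      have hα : α = 0 := aux_three α β (w m0 i) (w m0 j) (w m0 k) (hw _ _) (hw _ _) (hw _ _)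
        (fun e => hi (hco2 m0 i j hji.symm e)) (fun e => hi (hco2 m0 i k (Ne.symm hk.1) e))
        (fun e => hj (hco2 m0 j k (Ne.symm hk.2) e)) (by rw [← h]; exact hw _ _)
        (by rw [← h]; exact hw _ _) (by rw [← h]; exact hw _ _) (hβ m hm α β h)
      subst hα
      have hp : ∀ l, β ^ q l = 1 := by
        intro l
        have := hwq m l
        rw [h, zero_add, mul_pow, hwq, mul_one] at this
        exact this
      have hb : β = 1 := aux_coprime (hco i j hji.symm) (hp i) (hp j)
      subst hb
      exact hmm (hinj _ _ (fun l => by rw [h]; ring))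
    rw [Finset.sum_eq_single m0] at hsum
    · rw [if_pos hm0a] at hsum
      have h2 : (∑ j, w m0 j * a' j)⁻¹ * (B o m0 * B m0 o) = 0 := by linear_combination hsum
      rw [hc] at h2
      simpa [hl m0 hm0] using h2
    · intro m hm hmm
      rw [if_neg (hne m (Finset.ne_of_mem_erase hm) hmm)]; simp
    · intro h; simp [hm0] at h
  · push Not at hcase
    have hax : ∀ m, m ≠ o → ∑ j, w m j * a j = 0 →
        w m i ≠ 1 ∧ ∑ j, w m j * a' j = (w m i - 1) * a' i := by
      intro m hm h0
      obtain ⟨α, β, h⟩ := hspan m h0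
      have h1 : ∀ j, j ≠ i → w m j = 1 := by
        intro j hj
        obtain ⟨k, hk⟩ : ∃ k : Fin d, k ∉ ({i, j} : Finset (Fin d)) := by
          by_contra! h
          have h1 : (Finset.univ : Finset (Fin d)) ⊆ {i, j} := fun k _ => h k
          have h2 := (Finset.card_le_card h1).trans Finset.card_le_two
          simp at h2; omega
        simp at hk
        exact hco2 m j k (Ne.symm hk.2) (by rw [h, h, hcase j hj, hcase k hk.1])
      refine ⟨fun e => hm (hinj _ _ (fun j => ?_)), ?_⟩
      · rw [ho]
        by_cases hj : j = i
        · rw [hj, e]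
        · exact h1 j hj
      · have h3 : ∑ j, w m j * a' j - ∑ j, a' j = (w m i - 1) * a' i := by
          rw [← Finset.sum_sub_distrib, Finset.sum_eq_single i]
          · ring
          · intro j _ hj; rw [h1 j hj]; ring
          · simp
        rw [← h3, (hH _).1 ha', sub_zero]
    have hsum2 : ∑ m ∈ Finset.univ.erase o,
        (if ∑ j, w m j * a j = 0 then (w m i - 1)⁻¹ * c m else 0) = 0 := by
      have : ∑ m ∈ Finset.univ.erase o,
        (if ∑ j, w m j * a j = 0 then (w m i - 1)⁻¹ * c m else 0) = a' i * 0 := by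
        refine Eq.trans ?_ (congrArg (fun x => a' i * x) hsum)
        rw [Finset.mul_sum]
        refine Finset.sum_congr rfl fun m hm => ?_
        by_cases h : ∑ j, w m j * a j = 0
        · obtain ⟨h1, h2⟩ := hax m (Finset.ne_of_mem_erase hm) h
          rw [if_pos h, if_pos h, h2, ← hc, mul_inv]
          have := ha0 i
          field_simp
        · simp [h]
      simpa using this
    have hre := congrArg Complex.re hsum2
    rw [Complex.re_sum, Complex.zero_re] at hre
    have hterm : ∀ m ∈ Finset.univ.erase o,
        (if ∑ j, w m j * a j = 0 then (w m i - 1)⁻¹ * c m else 0 : ℂ).re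
        = -1/2 * (if ∑ j, w m j * a j = 0 then c m else 0) := by
      intro m hm
      by_cases h : ∑ j, w m j * a j = 0
      · rw [if_pos h, if_pos h, Complex.re_mul_ofReal,
          aux_re _ (hw m i) (hax m (Finset.ne_of_mem_erase hm) h).1]
      · simp [h]
    rw [Finset.sum_congr rfl hterm, ← Finset.mul_sum] at hre
    have hre2 : ∑ m ∈ Finset.univ.erase o, (if ∑ j, w m j * a j = 0 then c m else 0) = 0 := by
      linarith
    rw [Finset.sum_eq_zero_iff_of_nonneg] at hre2
    · simpa [hm0a] using hre2 m0 (by simp [hm0])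
    · intro m _
      split_ifs
      · exact hc0 m
      · exact le_rfl

lemma aux_rho (d : ℕ) (q : Fin d → ℕ) (j : Fin d) (m : ℕ) :
    rho d q j (m : ℤ) = Complex.exp (2 * Real.pi * Complex.I / (q j : ℂ)) ^ m := by
  rw [rho, ← Complex.exp_nat_mul]
  congr 1
  push_cast
  ring

lemma aux_conj (d : ℕ) (q : Fin d → ℕ) (V : (Fin d → ℤ) → ℝ) (l : Fin d → ℤ) :
    dft d q V (fun j => - l j) = (starRingEnd ℂ) (dft d q V l) := by
  simp only [dft, map_mul, map_sum, map_div₀, map_one, map_prod, Complex.conj_ofReal,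
    ← Complex.exp_conj, map_neg, Complex.conj_I, map_natCast, map_intCast, map_ofNat]
  congr 1
  refine Finset.sum_congr rfl fun n _ => ?_
  congr 2
  push_cast
  simp only [neg_mul, neg_div, Finset.sum_neg_distrib]
  ring

lemma aux_inv (d : ℕ) (q : Fin d → ℕ) (hq : ∀ j, 0 < q j) (V : (Fin d → ℤ) → ℝ)
    (h : ∀ l : Cell d q, dft d q V (fun j => ((l j : ℕ) : ℤ)) = 0) (n0 : Cell d q) :
    V (fun j => ((n0 j : ℕ) : ℤ)) = 0 := by
  let ζ : Fin d → ℂ := fun j => Complex.exp (2 * Real.pi * Complex.I / (q j : ℂ))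
  have hζ : ∀ j, IsPrimitiveRoot (ζ j) (q j) := fun j =>
    Complex.isPrimitiveRoot_exp _ (hq j).ne'
  have hζ0 : ∀ j, ζ j ≠ 0 := fun j => Complex.exp_ne_zero _
  have hexp : ∀ l n : Cell d q, Complex.exp (-(2 * Real.pi * Complex.I) *
      ∑ j, (((l j : ℕ) : ℤ) : ℂ) * ((n j : ℕ) : ℂ) / (q j : ℂ))
      = ∏ j, ((ζ j ^ (n j : ℕ))⁻¹) ^ (l j : ℕ) := by
    intro l n
    rw [Finset.mul_sum, Complex.exp_sum]
    refine Finset.prod_congr rfl fun j _ => ?_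
    simp only [ζ]
    rw [← Complex.exp_nat_mul, ← Complex.exp_neg, ← Complex.exp_nat_mul]
    congr 1
    push_cast
    ring
  have h1 : ∀ l : Cell d q, ∑ n : Cell d q, (V (fun j => ((n j : ℕ) : ℤ)) : ℂ) *
      ∏ j, ((ζ j ^ (n j : ℕ))⁻¹) ^ (l j : ℕ) = 0 := by
    intro l
    have h2 := h l
    rw [dft, mul_eq_zero] at h2
    rcases h2 with h2 | h2
    · exfalso
      rw [one_div, inv_eq_zero, Finset.prod_eq_zero_iff] at h2
      obtain ⟨j, -, hj⟩ := h2
      exact (hq j).ne' (by exact_mod_cast hj)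
    · rw [← h2]
      exact Finset.sum_congr rfl fun n _ => by rw [hexp]
  have h2 : ∑ l : Cell d q, (∏ j, (ζ j ^ (n0 j : ℕ)) ^ (l j : ℕ)) *
      ∑ n : Cell d q, (V (fun j => ((n j : ℕ) : ℤ)) : ℂ) *
      ∏ j, ((ζ j ^ (n j : ℕ))⁻¹) ^ (l j : ℕ) = 0 :=
    Finset.sum_eq_zero fun l _ => by rw [h1, mul_zero]
  simp only [Finset.mul_sum] at h2
  rw [Finset.sum_comm] at h2
  have h3 : ∀ n : Cell d q, ∑ l : Cell d q, (∏ j, (ζ j ^ (n0 j : ℕ)) ^ (l j : ℕ)) *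
      ((V (fun j => ((n j : ℕ) : ℤ)) : ℂ) * ∏ j, ((ζ j ^ (n j : ℕ))⁻¹) ^ (l j : ℕ))
      = (V (fun j => ((n j : ℕ) : ℤ)) : ℂ) *
        ∏ j, ∑ k : Fin (q j), (ζ j ^ (n0 j : ℕ) * (ζ j ^ (n j : ℕ))⁻¹) ^ (k : ℕ) := by
    intro n
    rw [Finset.prod_univ_sum, Fintype.piFinset_univ, Finset.mul_sum]
    refine Finset.sum_congr rfl fun l _ => ?_
    simp only [mul_pow, Finset.prod_mul_distrib]
    ring
  simp only [h3] at h2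
  rw [Finset.sum_eq_single n0] at h2
  · rw [mul_eq_zero] at h2
    rcases h2 with h2 | h2
    · exact_mod_cast h2
    · exfalso
      rw [Finset.prod_eq_zero_iff] at h2
      obtain ⟨j, -, hj⟩ := h2
      rw [mul_inv_cancel₀ (pow_ne_zero _ (hζ0 j))] at hj
      simp at hj
      exact (hq j).ne' hj
  · intro n _ hn
    obtain ⟨j, hj⟩ : ∃ j, n j ≠ n0 j := by
      by_contra! h
      exact hn (funext h)
    rw [Finset.prod_eq_zero (Finset.mem_univ j), mul_zero]
    rw [Fin.sum_univ_eq_sum_range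
      (fun k => (ζ j ^ (n0 j : ℕ) * (ζ j ^ (n j : ℕ))⁻¹) ^ k) (q j)]
    have hx : ζ j ^ (n0 j : ℕ) * (ζ j ^ (n j : ℕ))⁻¹ ≠ 1 := by
      intro e
      rw [← div_eq_mul_inv, div_eq_one_iff_eq (pow_ne_zero _ (hζ0 j))] at e
      exact hj (Fin.ext ((hζ j).pow_inj (n0 j).2 (n j).2 e).symm)
    have hxq : (ζ j ^ (n0 j : ℕ) * (ζ j ^ (n j : ℕ))⁻¹) ^ q j = 1 := by
      rw [mul_pow, inv_pow, pow_right_comm (ζ j) (n0 j : ℕ), pow_right_comm (ζ j) (n j : ℕ),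
        (hζ j).pow_eq_one]
      simp
    rw [geom_sum_eq hx, hxq]; simp
  · simp

lemma aux_matrix (d : ℕ) (q : Fin d → ℕ) (V : (Fin d → ℤ) → ℝ) (z : Fin d → ℂ) (lam : ℂ) :
    floquetDet d q V z lam = (Matrix.diagonal (fun m : Cell d q =>
      ∑ j, (rho d q j (m j : ℕ) * z j + (rho d q j (m j : ℕ) * z j)⁻¹) - lam) +
      Matrix.of fun n n' : Cell d q =>
        dft d q V (fun j => ((n j : ℕ) : ℤ) - ((n' j : ℕ) : ℤ))).det := by
  rw [floquetDet]
  congr 1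
  ext n n'
  by_cases h : n = n'
  · subst h
    simp [floquetMatrix]; ring
  · simp [floquetMatrix, h]

/-- Theorem 1.8, Ambarzumian-type theorem: if `V` and the zero potential are
Fermi isospectral, then `V` is zero. -/
theorem fermi_isospectral_with_zero_potential
    (d : ℕ) (hd : 3 ≤ d)
    (q : Fin d → ℕ) (hq : ∀ j, 0 < q j)
    (hco : ∀ i j : Fin d, i ≠ j → Nat.Coprime (q i) (q j))
    (V : (Fin d → ℤ) → ℝ)
    (hVper : IsPeriodicPotential d q V)
    (hFermi : FermiIsospectral d q V (fun _ => 0)) :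
    ∀ n : Fin d → ℤ, V n = 0 := by
  obtain ⟨lam, hset⟩ := hFermi
  have hζ : ∀ j, IsPrimitiveRoot (Complex.exp (2 * Real.pi * Complex.I / (q j : ℂ))) (q j) :=
    fun j => Complex.isPrimitiveRoot_exp _ (hq j).ne'
  let o : Cell d q := fun j => ⟨0, hq j⟩
  have ho : ∀ j, rho d q j ((o j : ℕ) : ℤ) = 1 := by
    intro j; rw [aux_rho]; simp [o]
  have hmain := aux_main hd q hco (fun (m : Cell d q) j => rho d q j ((m j : ℕ) : ℤ))
    (fun m j => by
      rw [aux_rho, norm_pow, (hζ j).norm'_eq_one (hq j).ne', one_pow])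
    (fun m j => by
      rw [aux_rho, pow_right_comm, (hζ j).pow_eq_one, one_pow])
    (fun m m' h => by
      funext j
      have e := h j
      rw [aux_rho, aux_rho] at e
      exact Fin.ext ((hζ j).pow_inj (m j).2 (m' j).2 e))
    o ho
    (Matrix.of fun n n' : Cell d q =>
        dft d q V (fun j => ((n j : ℕ) : ℤ) - ((n' j : ℕ) : ℤ))) lam
    (fun z hz hsum => by
      rw [← aux_matrix]
      have hmem : z ∈ {z : Fin d → ℂ | (∀ j, z j ≠ 0) ∧
          floquetDet d q (fun _ => 0) z lam = 0} := by
        refine ⟨hz, ?_⟩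
        rw [aux_matrix]
        have h0 : (Matrix.of fun n n' : Cell d q =>
          dft d q (fun _ => 0) (fun j => ((n j : ℕ) : ℤ) - ((n' j : ℕ) : ℤ))) = 0 := by
          ext n n'
          simp [dft]
        rw [h0, add_zero, Matrix.det_diagonal]
        refine Finset.prod_eq_zero (Finset.mem_univ o) ?_
        simp only [ho, one_mul, hsum, sub_self]
      rw [← hset] at hmem
      exact hmem.2)
    (fun m => Complex.normSq (dft d q V (fun j => ((m j : ℕ) : ℤ))))
    (fun m => Complex.normSq_nonneg _)
    (fun m => by
      rw [← Complex.mul_conj, ← aux_conj, mul_comm]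
      simp [o])
  have hzero : ∀ l : Cell d q, dft d q V (fun j => ((l j : ℕ) : ℤ)) = 0 := by
    intro l
    by_cases hl : l = o
    · have := hmain.1
      rw [hl]
      simpa [o] using this
    · exact Complex.normSq_eq_zero.1 (hmain.2 l hl)
  intro n
  have hnn : ∀ j, 0 ≤ n j % (q j : ℤ) := fun j =>
    Int.emod_nonneg _ (by exact_mod_cast (hq j).ne')
  have hlt : ∀ j, n j % (q j : ℤ) < q j := fun j =>
    Int.emod_lt_of_pos _ (by exact_mod_cast hq j)
  have h := aux_inv d q hq V hzero
    (fun j => ⟨(n j % (q j : ℤ)).toNat, by have := hnn j; have := hlt j; omega⟩)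
  simp only [Int.toNat_of_nonneg (hnn _)] at h
  rw [← h, ← hVper (fun j => n j % (q j : ℤ)) (fun j => n j - n j % (q j : ℤ))
    (fun j => Int.dvd_self_sub_emod)]
  congr 1
  funext j
  simp

end
end

section
/- Let d ≥ 2, let q_1, …, q_d be pairwise coprime positive integers, and let V : ℤ^d → ℝ be Γ-periodic. Fix r ≥ 2 and d_1,…,d_r ≥ 1 with d_1 + ⋯ + d_r = d. Then V is (d_1,…,d_r) separable if and only if V̂(l) = 0 for every l ∈ W such that at least two of the blocks l̃_1, …, l̃_r are nonzero (where l̃_j = (l_{d_1+⋯+d_{j−1}+1},…,l_{d_1+⋯+d_j}) is the j-th block of coordinates of l). -/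
open scoped BigOperators
open Complex

noncomputable section

/-- The exponential `e^{2πi Σ a_j n_j/q_j}`. -/
def expPair (d : ℕ) (q : Fin d → ℕ) (a n : Fin d → ℤ) : ℂ :=
  Complex.exp (2 * Real.pi * Complex.I * ∑ j, (a j : ℂ) * (n j : ℂ) / (q j : ℂ))

/-- Inclusion of the cell into `ℤ^d`. -/
def cellInt {d : ℕ} {q : Fin d → ℕ} (n : Cell d q) : Fin d → ℤ := fun j => ((n j : ℕ) : ℤ)

lemma expPair_comm (d : ℕ) (q : Fin d → ℕ) (a n : Fin d → ℤ) :
    expPair d q a n = expPair d q n a := by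
  unfold expPair
  simp only [mul_comm]

lemma expPair_add (d : ℕ) (q : Fin d → ℕ) (a n m : Fin d → ℤ) :
    expPair d q a (n + m) = expPair d q a n * expPair d q a m := by
  unfold expPair
  rw [← Complex.exp_add, ← mul_add, ← Finset.sum_add_distrib]
  congr 2
  refine Finset.sum_congr rfl fun j _ => ?_
  simp only [Pi.add_apply]
  push_cast
  ring

lemma expPair_dvd (d : ℕ) (q : Fin d → ℕ) (hq : ∀ j, 0 < q j) (a γ : Fin d → ℤ)
    (h : ∀ j, (q j : ℤ) ∣ γ j) : expPair d q a γ = 1 := by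
  choose c hc using h
  unfold expPair
  rw [Complex.exp_eq_one_iff]
  refine ⟨∑ j, a j * c j, ?_⟩
  rw [mul_comm]
  congr 1
  push_cast
  refine Finset.sum_congr rfl fun j _ => ?_
  rw [hc j]
  have : (q j : ℂ) ≠ 0 := by exact_mod_cast (hq j).ne'
  push_cast
  field_simp

lemma expPair_congr (d : ℕ) (q : Fin d → ℕ) (hq : ∀ j, 0 < q j) (a n m : Fin d → ℤ)
    (h : ∀ j, (q j : ℤ) ∣ n j - m j) : expPair d q a n = expPair d q a m := by
  have h1 : n = m + (n - m) := by abel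
  rw [h1, expPair_add, expPair_dvd d q hq a (n - m) (by simpa using h), mul_one]

lemma sum_zero_of_twist {α : Type*} [Fintype α] (σ : α ≃ α) (f : α → ℂ) (z : ℂ) (hz : z ≠ 1)
    (h : ∀ x, f (σ x) = f x * z) : ∑ x, f x = 0 := by
  have h1 : ∑ x, f x = (∑ x, f x) * z := by
    rw [Finset.sum_mul, ← Equiv.sum_comp σ]
    exact Finset.sum_congr rfl fun x _ => h x
  have h2 : (∑ x, f x) * (1 - z) = 0 := by linear_combination h1
  rcases mul_eq_zero.1 h2 with h3 | h3
  · exact h3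
  · exact absurd (sub_eq_zero.1 h3).symm hz

lemma sum_expPair_zero (d : ℕ) (q : Fin d → ℕ) (hq : ∀ j, 0 < q j) (a : Fin d → ℤ) (k : Fin d)
    (hk : ¬ (q k : ℤ) ∣ a k) (f : Cell d q → ℂ)
    (hf : ∀ n m : Cell d q, (∀ j, j ≠ k → n j = m j) → f n = f m) :
    ∑ n : Cell d q, f n * expPair d q a (cellInt n) = 0 := by
  haveI : ∀ j, NeZero (q j) := fun j => ⟨(hq j).ne'⟩
  have h1 : 1 < q k := by
    rcases Nat.lt_or_ge 1 (q k) with h | h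
    · exact h
    · have : q k = 1 := le_antisymm h (hq k)
      exact absurd (by simp [this]) hk
  let s : Cell d q := Pi.single k ⟨1, h1⟩
  have hs : ∀ n : Cell d q, expPair d q a (cellInt (n + s))
      = expPair d q a (cellInt n) * expPair d q a (cellInt s) := by
    intro n
    rw [← expPair_add]
    apply expPair_congr d q hq
    intro j
    simp only [cellInt, Pi.add_apply, Fin.val_add]
    push_cast
    have := Int.emod_add_mul_ediv (((n j : ℕ) : ℤ) + ((s j : ℕ) : ℤ)) (q j)
    exact ⟨-((((n j : ℕ) : ℤ) + ((s j : ℕ) : ℤ)) / (q j)), by linarith⟩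
  refine sum_zero_of_twist (Equiv.addRight s) _ (expPair d q a (cellInt s)) ?_ ?_
  · unfold expPair
    rw [Finset.sum_eq_single k]
    · intro h
      obtain ⟨c, hc⟩ := Complex.exp_eq_one_iff.1 h
      apply hk
      refine ⟨c, ?_⟩
      have hq0 : (q k : ℂ) ≠ 0 := by exact_mod_cast (hq k).ne'
      have h2 : (2 * Real.pi * Complex.I : ℂ) ≠ 0 := Complex.two_pi_I_ne_zero
      rw [mul_comm (c : ℂ)] at hc
      have h3 := mul_left_cancel₀ h2 hc
      simp only [cellInt, s, Pi.single_eq_same] at h3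
      rw [div_eq_iff hq0] at h3
      have h4 : (a k : ℂ) = (q k : ℂ) * (c : ℂ) := by
        rw [mul_comm (q k : ℂ), ← h3]; simp
      exact_mod_cast h4
    · intro j _ hj
      simp [cellInt, s, Pi.single_eq_of_ne hj]
    · simp
  · intro n
    simp only [Equiv.coe_addRight]
    rw [hs, hf (n + s) n, mul_assoc]
    intro j hj
    simp [s, Pi.single_eq_of_ne hj]

lemma dft_eq (d : ℕ) (q : Fin d → ℕ) (V : (Fin d → ℤ) → ℝ) (l : Fin d → ℤ) :
    dft d q V l = (1 / ∏ j, (q j : ℂ)) *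
      ∑ n : Cell d q, (V (cellInt n) : ℂ) * expPair d q (-l) (cellInt n) := by
  unfold dft expPair cellInt
  congr 1
  refine Finset.sum_congr rfl fun n _ => ?_
  congr 2
  rw [neg_mul, ← mul_neg, ← Finset.sum_neg_distrib]
  congr 1
  refine Finset.sum_congr rfl fun j _ => ?_
  simp only [Pi.neg_apply]
  push_cast
  ring

lemma dft_inversion_cell (d : ℕ) (q : Fin d → ℕ) (hq : ∀ j, 0 < q j) (V : (Fin d → ℤ) → ℝ)
    (m : Cell d q) :
    (V (cellInt m) : ℂ) =
      ∑ l : Cell d q, dft d q V (cellInt l) * expPair d q (cellInt l) (cellInt m) := by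
  have key : ∀ n : Cell d q, ∑ l : Cell d q,
      expPair d q (-(cellInt l)) (cellInt n) * expPair d q (cellInt l) (cellInt m)
        = if n = m then ∏ j, (q j : ℂ) else 0 := by
    intro n
    have h1 : ∀ l : Cell d q,
        expPair d q (-(cellInt l)) (cellInt n) * expPair d q (cellInt l) (cellInt m)
        = 1 * expPair d q (cellInt m - cellInt n) (cellInt l) := by
      intro l
      unfold expPair
      rw [← Complex.exp_add, ← mul_add, ← Finset.sum_add_distrib, one_mul]
      congr 2
      refine Finset.sum_congr rfl fun j _ => ?_
      simp only [Pi.neg_apply, Pi.sub_apply]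
      push_cast
      ring
    rw [Finset.sum_congr rfl fun l _ => h1 l]
    split_ifs with h
    · subst h
      simp [expPair, Fintype.card_pi]
    · obtain ⟨k, hk⟩ := Function.ne_iff.1 h
      refine sum_expPair_zero d q hq _ k ?_ _ (fun _ _ _ => rfl)
      intro hdvd
      apply hk
      have h2 := (n k).2
      have h3 := (m k).2
      have h4 := Int.eq_zero_of_abs_lt_dvd hdvd (by
        simp only [Pi.sub_apply, cellInt]
        rw [abs_lt]
        constructor <;> omega)
      simp only [Pi.sub_apply, cellInt] at h4
      apply Fin.ext
      omega
  have hQ : (∏ j, (q j : ℂ)) ≠ 0 :=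
    Finset.prod_ne_zero_iff.2 fun j _ => by exact_mod_cast (hq j).ne'
  symm
  calc ∑ l : Cell d q, dft d q V (cellInt l) * expPair d q (cellInt l) (cellInt m)
      = (1 / ∏ j, (q j : ℂ)) * ∑ n : Cell d q, (V (cellInt n) : ℂ) * ∑ l : Cell d q,
        expPair d q (-(cellInt l)) (cellInt n) * expPair d q (cellInt l) (cellInt m) := by
        simp only [dft_eq, Finset.mul_sum, Finset.sum_mul]
        rw [Finset.sum_comm]
        refine Finset.sum_congr rfl fun n _ => Finset.sum_congr rfl fun l _ => ?_
        ring
    _ = (V (cellInt m) : ℂ) := by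
        simp only [key]
        simp only [mul_ite, mul_zero, Finset.sum_ite_eq', Finset.mem_univ, if_true]
        field_simp

lemma dft_inversion (d : ℕ) (q : Fin d → ℕ) (hq : ∀ j, 0 < q j) (V : (Fin d → ℤ) → ℝ)
    (hV : IsPeriodicPotential d q V) (n : Fin d → ℤ) :
    (V n : ℂ) = ∑ l : Cell d q, dft d q V (cellInt l) * expPair d q (cellInt l) n := by
  have hpos : ∀ j, (0 : ℤ) < q j := fun j => by exact_mod_cast hq j
  let m : Cell d q := fun j => ⟨(n j % (q j : ℤ)).toNat, by
    have h1 := Int.emod_nonneg (n j) (hpos j).ne'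
    have h2 := Int.emod_lt_of_pos (n j) (hpos j)
    omega⟩
  have hm : ∀ j, (q j : ℤ) ∣ n j - cellInt m j := by
    intro j
    have h1 := Int.emod_nonneg (n j) (hpos j).ne'
    simp only [cellInt, m, Int.toNat_of_nonneg h1]
    exact Int.dvd_self_sub_emod
  have hVn : V n = V (cellInt m) := by
    have h := hV (cellInt m) (n - cellInt m) (by simpa using hm)
    rw [← h]; congr 1; abel
  rw [hVn, dft_inversion_cell d q hq V m]
  refine Finset.sum_congr rfl fun l _ => ?_
  rw [expPair_congr d q hq _ n _ hm]

lemma blockEmbed_lt {r d : ℕ} (D : Fin r → ℕ) (hsum : ∑ j, D j = d) (j₁ j₂ : Fin r)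
    (h : j₁ < j₂) (i₁ : Fin (D j₁)) (i₂ : Fin (D j₂)) :
    blockEmbed D hsum j₁ i₁ < blockEmbed D hsum j₂ i₂ := by
  have hj : j₁ ∉ Finset.univ.filter (fun k => k < j₁) := by simp
  have h2 : (∑ k ∈ Finset.univ.filter (fun k => k < j₁), D k) + D j₁
      ≤ ∑ k ∈ Finset.univ.filter (fun k => k < j₂), D k := by
    rw [add_comm, ← Finset.sum_insert hj]
    apply Finset.sum_le_sum_of_subset
    intro k hk
    simp only [Finset.mem_insert, Finset.mem_filter, Finset.mem_univ, true_and] at hk ⊢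
    rcases hk with rfl | hk
    · exact h
    · exact hk.trans h
  have h3 := i₁.2
  rw [Fin.lt_def]
  simp only [blockEmbed]
  omega

lemma blockEmbed_ne {r d : ℕ} (D : Fin r → ℕ) (hsum : ∑ j, D j = d) (j₁ j₂ : Fin r)
    (h : j₁ ≠ j₂) (i₁ : Fin (D j₁)) (i₂ : Fin (D j₂)) :
    blockEmbed D hsum j₁ i₁ ≠ blockEmbed D hsum j₂ i₂ := by
  rcases lt_or_gt_of_ne h with h | h
  · exact (blockEmbed_lt D hsum _ _ h _ _).ne
  · exact (blockEmbed_lt D hsum _ _ h _ _).ne'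

lemma blockEmbed_bijective {r d : ℕ} (D : Fin r → ℕ) (hsum : ∑ j, D j = d) :
    Function.Bijective (fun p : (j : Fin r) × Fin (D j) => blockEmbed D hsum p.1 p.2) := by
  rw [Fintype.bijective_iff_injective_and_card]
  constructor
  · rintro ⟨j₁, i₁⟩ ⟨j₂, i₂⟩ h
    by_cases hj : j₁ = j₂
    · subst hj
      have h' := congrArg Fin.val h
      simp only [blockEmbed, Nat.add_left_cancel_iff] at h'
      rw [Fin.ext h']
    · exact absurd h (blockEmbed_ne D hsum _ _ hj _ _)
  · simp [hsum]

lemma sum_blockEmbed {r d : ℕ} (D : Fin r → ℕ) (hsum : ∑ j, D j = d) (F : Fin d → ℂ) :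
    ∑ k, F k = ∑ j, ∑ i, F (blockEmbed D hsum j i) := by
  rw [← Fintype.sum_sigma']
  exact ((blockEmbed_bijective D hsum).sum_comp F).symm

/-- Lemma 3.1: `V` is `(d₁,…,d_r)` separable iff `V̂(l) = 0` for every
`l ∈ W` for which at least two blocks of coordinates of `l` are nonzero. -/
theorem separable_iff_dft_vanishes_on_mixed_frequencies
    (d r : ℕ) (hd : 2 ≤ d) (hr : 2 ≤ r)
    (q : Fin d → ℕ) (hq : ∀ j, 0 < q j)
    (hco : ∀ i j : Fin d, i ≠ j → Nat.Coprime (q i) (q j))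
    (D : Fin r → ℕ) (hD : ∀ j, 1 ≤ D j) (hsum : ∑ j, D j = d)
    (V : (Fin d → ℤ) → ℝ)
    (hVper : IsPeriodicPotential d q V) :
    IsSeparablePotential d D hsum V ↔
      ∀ l : Cell d q,
        (∃ j₁ j₂ : Fin r, j₁ ≠ j₂ ∧
          (∃ i : Fin (D j₁), (l (blockEmbed D hsum j₁ i) : ℕ) ≠ 0) ∧
          (∃ i : Fin (D j₂), (l (blockEmbed D hsum j₂ i) : ℕ) ≠ 0)) →
        dft d q V (fun j => ((l j : ℕ) : ℤ)) = 0 := by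
  constructor
  · rintro ⟨Vj, hVj⟩ l ⟨j₁, j₂, hne, ⟨i₁, hi₁⟩, ⟨i₂, hi₂⟩⟩
    change dft d q V (cellInt l) = 0
    have hnd : ∀ k, (l k : ℕ) ≠ 0 → ¬ (q k : ℤ) ∣ (-(cellInt l)) k := by
      intro k hk hdvd
      simp only [Pi.neg_apply, dvd_neg, cellInt] at hdvd
      exact hk (Nat.eq_zero_of_dvd_of_lt (by exact_mod_cast hdvd) (l k).2)
    rw [dft_eq]
    simp only [hVj, Complex.ofReal_sum, Finset.sum_mul]
    rw [Finset.sum_comm, Finset.sum_eq_zero, mul_zero]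
    intro j _
    obtain ⟨j', i', hj', hi'⟩ : ∃ (j' : Fin r) (i' : Fin (D j')), j ≠ j' ∧
        (l (blockEmbed D hsum j' i') : ℕ) ≠ 0 := by
      by_cases h : j = j₁
      · exact ⟨j₂, i₂, h ▸ hne, hi₂⟩
      · exact ⟨j₁, i₁, h, hi₁⟩
    refine sum_expPair_zero d q hq _ _ (hnd _ hi')
      (fun n => ((Vj j (fun i => cellInt n (blockEmbed D hsum j i)) : ℝ) : ℂ)) ?_
    intro n m hnm
    have : (fun i => cellInt n (blockEmbed D hsum j i))
        = (fun i => cellInt m (blockEmbed D hsum j i)) := by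
      funext i
      simp only [cellInt, hnm _ (blockEmbed_ne D hsum j j' hj' i i')]
    simp only [this]
  · intro h
    have hg : ∀ l : Cell d q, ∃ j : Fin r, dft d q V (cellInt l) ≠ 0 →
        ∀ j', j' ≠ j → ∀ i, (l (blockEmbed D hsum j' i) : ℕ) = 0 := by
      intro l
      by_cases h0 : ∃ j : Fin r, ∃ i : Fin (D j), (l (blockEmbed D hsum j i) : ℕ) ≠ 0
      · obtain ⟨j, i, hi⟩ := h0
        refine ⟨j, fun hl j' hj' i' => ?_⟩
        by_contra hc
        exact hl (h l ⟨j', j, hj', ⟨i', hc⟩, ⟨i, hi⟩⟩)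
      · push Not at h0
        exact ⟨⟨0, by omega⟩, fun _ j' _ i => h0 j' i⟩
    choose g hg using hg
    refine ⟨fun j x => (∑ l : Cell d q with g l = j, dft d q V (cellInt l) *
      Complex.exp (2 * Real.pi * Complex.I * ∑ i, (cellInt l (blockEmbed D hsum j i) : ℂ) *
        (x i : ℂ) / (q (blockEmbed D hsum j i) : ℂ))).re, fun n => ?_⟩
    rw [← Complex.re_sum, ← Complex.ofReal_re (V n), dft_inversion d q hq V hVper n,
      ← Finset.sum_fiberwise _ g]
    congr 1
    refine Finset.sum_congr rfl fun j _ => Finset.sum_congr rfl fun l hl => ?_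
    simp only [Finset.mem_filter, Finset.mem_univ, true_and] at hl
    subst hl
    by_cases h0 : dft d q V (cellInt l) = 0
    · simp [h0]
    · unfold expPair
      rw [sum_blockEmbed D hsum, Finset.sum_eq_single (g l)]
      · intro j' _ hj'
        refine Finset.sum_eq_zero fun i _ => ?_
        simp [cellInt, hg l h0 j' hj' i]
      · simp


end
end

section
/- Let q_1, q_2, q_3 be pairwise coprime positive integers, and for j = 1,2,3 write ρ^j_m = e^{2πi m/q_j}. Suppose l_j, l_j′ ∈ {0,1,…,q_j−1} for j = 1,2,3 satisfy det [[1, 1, 1], [ρ^1_{l_1}, ρ^2_{l_2}, ρ^3_{l_3}], [ρ^1_{l_1′}, ρ^2_{l_2′}, ρ^3_{l_3′}]] = 0. Then at least one of the following holds: (i) l_1 = l_2 = l_3 = 0; (ii) l_1′ = l_2′ = l_3′ = 0; (iii) l_1 = l_1′, l_2 = l_2′ and l_3 = l_3′; (iv) l_1 = l_1′ = 0 and l_2 = l_2′ = 0; (v) l_1 = l_1′ = 0 and l_3 = l_3′ = 0; (vi) l_2 = l_2′ = 0 and l_3 = l_3′ = 0. -/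
open scoped BigOperators
open Complex


theorem aux_exp_pow (q l : ℕ) :
    Complex.exp (2 * Real.pi * Complex.I * (l : ℂ) / (q : ℂ))
      = Complex.exp (2 * Real.pi * Complex.I / (q : ℂ)) ^ l := by
  rw [← Complex.exp_nat_mul]
  congr 1
  ring

theorem aux_coprime_one {q r : ℕ} (h : Nat.Coprime q r) {z : ℂ} (hq : z ^ q = 1)
    (hr : z ^ r = 1) : z = 1 := by
  have h1 : orderOf z ∣ Nat.gcd q r :=
    Nat.dvd_gcd (orderOf_dvd_of_pow_eq_one hq) (orderOf_dvd_of_pow_eq_one hr)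
  rw [h] at h1
  exact orderOf_eq_one_iff.mp (Nat.dvd_one.mp h1)

theorem aux_ratio {q r : ℕ} (h : Nat.Coprime q r) {b b' c c' : ℂ} (hb : b ^ q = 1)
    (hb' : b' ^ q = 1) (hc : c ^ r = 1) (hc' : c' ^ r = 1) (hb0 : b ≠ 0) (hc0 : c ≠ 0)
    (e : b * c' = c * b') : b' = b ∧ c' = c := by
  have e2 : b' / b = c' / c := by
    rw [div_eq_div_iff hb0 hc0]
    linear_combination -e
  have h1 : b' / b = 1 := by
    apply aux_coprime_one h
    · rw [div_pow, hb, hb', div_one]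
    · rw [e2, div_pow, hc, hc', div_one]
  have h2 : c' / c = 1 := e2 ▸ h1
  exact ⟨(div_eq_one_iff_eq hb0).mp h1, (div_eq_one_iff_eq hc0).mp h2⟩

theorem aux_key_s10 {a b c a' b' c' : ℂ} (ha : ‖a‖ = 1) (hb : ‖b‖ = 1) (hc : ‖c‖ = 1)
    (ha' : ‖a'‖ = 1) (hb' : ‖b'‖ = 1) (hc' : ‖c'‖ = 1)
    (h : (b - a) * (c' - a') = (c - a) * (b' - a')) :
    (b - a) * (c' - a') = 0 ∨ b * c' = c * b' := by
  have h2 := congrArg (starRingEnd ℂ) h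
  have n0 : ∀ z : ℂ, ‖z‖ = 1 → z ≠ 0 := by
    rintro z hz rfl
    simp at hz
  have ha0 := n0 a ha
  have hb0 := n0 b hb
  have hc0 := n0 c hc
  have ha0' := n0 a' ha'
  have hb0' := n0 b' hb'
  have hc0' := n0 c' hc'
  simp only [map_mul, map_sub, ← Complex.inv_eq_conj ha, ← Complex.inv_eq_conj hb,
    ← Complex.inv_eq_conj hc, ← Complex.inv_eq_conj ha', ← Complex.inv_eq_conj hb',
    ← Complex.inv_eq_conj hc'] at h2
  have h3 : (a - b) * (a' - c') * (c * b') = (a - c) * (a' - b') * (b * c') := by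
    have e1 : (a - b) * (a' - c') * (c * b')
        = (b⁻¹ - a⁻¹) * (c'⁻¹ - a'⁻¹) * (a * b * c * a' * b' * c') := by
      field_simp
    have e2 : (a - c) * (a' - b') * (b * c')
        = (c⁻¹ - a⁻¹) * (b'⁻¹ - a'⁻¹) * (a * b * c * a' * b' * c') := by
      field_simp
    rw [e1, e2, h2]
  have h4 : (b - a) * (c' - a') * (b * c' - c * b') = 0 := by
    linear_combination (b * c') * h - h3
  rcases mul_eq_zero.mp h4 with h5 | h5
  · exact Or.inl h5
  · exact Or.inr (sub_eq_zero.mp h5)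

/-- Lemma 3.2: if `q₁, q₂, q₃` are pairwise coprime and the determinant of
the matrix `[[1,1,1], [ρ¹_{l₁}, ρ²_{l₂}, ρ³_{l₃}], [ρ¹_{l₁'}, ρ²_{l₂'}, ρ³_{l₃'}]]` of roots
of unity vanishes, then `(l₁,l₂,l₃)` and `(l₁',l₂',l₃')` fall into one of six cases. -/
theorem roots_of_unity_det_vanishing_cases
    (q1 q2 q3 : ℕ) (hq1 : 0 < q1) (hq2 : 0 < q2) (hq3 : 0 < q3)
    (h12 : Nat.Coprime q1 q2) (h13 : Nat.Coprime q1 q3) (h23 : Nat.Coprime q2 q3)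
    (l1 l1' l2 l2' l3 l3' : ℕ)
    (hl1 : l1 < q1) (hl1' : l1' < q1) (hl2 : l2 < q2) (hl2' : l2' < q2)
    (hl3 : l3 < q3) (hl3' : l3' < q3)
    (hdet : Matrix.det
      !![(1 : ℂ), 1, 1;
         Complex.exp (2 * Real.pi * Complex.I * (l1 : ℂ) / (q1 : ℂ)),
           Complex.exp (2 * Real.pi * Complex.I * (l2 : ℂ) / (q2 : ℂ)),
           Complex.exp (2 * Real.pi * Complex.I * (l3 : ℂ) / (q3 : ℂ));
         Complex.exp (2 * Real.pi * Complex.I * (l1' : ℂ) / (q1 : ℂ)),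
           Complex.exp (2 * Real.pi * Complex.I * (l2' : ℂ) / (q2 : ℂ)),
           Complex.exp (2 * Real.pi * Complex.I * (l3' : ℂ) / (q3 : ℂ))] = 0) :
    (l1 = 0 ∧ l2 = 0 ∧ l3 = 0) ∨
    (l1' = 0 ∧ l2' = 0 ∧ l3' = 0) ∨
    (l1 = l1' ∧ l2 = l2' ∧ l3 = l3') ∨
    (l1 = 0 ∧ l1' = 0 ∧ l2 = 0 ∧ l2' = 0) ∨
    (l1 = 0 ∧ l1' = 0 ∧ l3 = 0 ∧ l3' = 0) ∨
    (l2 = 0 ∧ l2' = 0 ∧ l3 = 0 ∧ l3' = 0) := by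
  have P1 := Complex.isPrimitiveRoot_exp q1 hq1.ne'
  have P2 := Complex.isPrimitiveRoot_exp q2 hq2.ne'
  have P3 := Complex.isPrimitiveRoot_exp q3 hq3.ne'
  simp only [aux_exp_pow] at hdet
  generalize Complex.exp (2 * Real.pi * Complex.I / (q1 : ℂ)) = x at *
  generalize Complex.exp (2 * Real.pi * Complex.I / (q2 : ℂ)) = y at *
  generalize Complex.exp (2 * Real.pi * Complex.I / (q3 : ℂ)) = z at *
  have pw : ∀ {w : ℂ} {q : ℕ}, IsPrimitiveRoot w q → ∀ l : ℕ, (w ^ l) ^ q = 1 := by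
    intro w q hw l
    rw [← pow_mul, mul_comm, pow_mul, hw.pow_eq_one, one_pow]
  have nm : ∀ {w : ℂ} {q : ℕ}, IsPrimitiveRoot w q → 0 < q → ∀ l : ℕ, ‖w ^ l‖ = 1 := by
    intro w q hw hq l
    exact Complex.norm_eq_one_of_pow_eq_one (pw hw l) hq.ne'
  have zr : ∀ {w : ℂ} {q : ℕ}, IsPrimitiveRoot w q → ∀ {l : ℕ}, l < q → w ^ l = 1 → l = 0 := by
    intro w q hw l hl h
    exact hw.pow_inj hl (by omega) (by simpa using h)
  have same : ∀ {w v : ℂ} {q r : ℕ}, IsPrimitiveRoot w q → IsPrimitiveRoot v r →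
      Nat.Coprime q r → ∀ {l m : ℕ}, l < q → m < r → w ^ l = v ^ m → l = 0 ∧ m = 0 := by
    intro w v q r hw hv hqr l m hl hm h
    have h1 : w ^ l = 1 := aux_coprime_one hqr (pw hw l) (by rw [h]; exact pw hv m)
    exact ⟨zr hw hl h1, zr hv hm (h ▸ h1)⟩
  have h0 : (y ^ l2 - x ^ l1) * (z ^ l3' - x ^ l1') = (z ^ l3 - x ^ l1) * (y ^ l2' - x ^ l1') := by
    simp [Matrix.det_fin_three] at hdet
    linear_combination hdet
  rcases aux_key_s10 (nm P1 hq1 l1) (nm P2 hq2 l2) (nm P3 hq3 l3) (nm P1 hq1 l1') (nm P2 hq2 l2')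
    (nm P3 hq3 l3') h0 with h | h
  · have h' := h
    rw [h0] at h'
    rcases mul_eq_zero.mp h with e | e <;> rcases mul_eq_zero.mp h' with f | f
    · have := same P1 P2 h12 hl1 hl2 (sub_eq_zero.mp e).symm
      have := same P1 P3 h13 hl1 hl3 (sub_eq_zero.mp f).symm
      omega
    · have := same P1 P2 h12 hl1 hl2 (sub_eq_zero.mp e).symm
      have := same P1 P2 h12 hl1' hl2' (sub_eq_zero.mp f).symm
      omega
    · have := same P1 P3 h13 hl1' hl3' (sub_eq_zero.mp e).symm
      have := same P1 P3 h13 hl1 hl3 (sub_eq_zero.mp f).symm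
      omega
    · have := same P1 P3 h13 hl1' hl3' (sub_eq_zero.mp e).symm
      have := same P1 P2 h12 hl1' hl2' (sub_eq_zero.mp f).symm
      omega
  · have n0 : ∀ w : ℂ, ‖w‖ = 1 → w ≠ 0 := by
      rintro w hw rfl
      simp at hw
    obtain ⟨e, f⟩ := aux_ratio h23 (pw P2 l2) (pw P2 l2') (pw P3 l3) (pw P3 l3')
      (n0 _ (nm P2 hq2 l2)) (n0 _ (nm P3 hq3 l3)) h
    have e' := P2.pow_inj hl2' hl2 e
    have f' := P3.pow_inj hl3' hl3 f
    have h5 : (x ^ l1 - x ^ l1') * (y ^ l2 - z ^ l3) = 0 := by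
      rw [e, f] at h0
      linear_combination h0
    rcases mul_eq_zero.mp h5 with g | g
    · have := P1.pow_inj hl1 hl1' (sub_eq_zero.mp g)
      omega
    · have := same P2 P3 h23 hl2 hl3 (sub_eq_zero.mp g)
      omega
end

section
/- Let d ≥ 2, let q_1, …, q_d be pairwise coprime positive integers, and let V, Y : ℤ^d → ℝ be Γ-periodic potentials that are Fermi isospectral. Then [V] = [Y], i.e., V and Y have the same average over a periodicity cell. -/
open scoped BigOperators
open Complex

noncomputable section

lemma rho_eq (d : ℕ) (q : Fin d → ℕ) (j : Fin d) (m : ℕ) :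
    rho d q j (m : ℕ) = Complex.exp (2 * Real.pi * Complex.I / (q j : ℂ)) ^ m := by
  unfold rho
  rw [← Complex.exp_nat_mul]
  congr 1
  push_cast
  ring

lemma rho_ne_zero' (d : ℕ) (q : Fin d → ℕ) (j : Fin d) (m : ℤ) : rho d q j m ≠ 0 :=
  Complex.exp_ne_zero _

lemma rho_pow (d : ℕ) (q : Fin d → ℕ) (hq : ∀ j, 0 < q j) (j : Fin d) (m : ℕ) :
    rho d q j (m : ℕ) ^ (q j) = 1 := by
  rw [rho_eq, pow_right_comm,
    (Complex.isPrimitiveRoot_exp (q j) (hq j).ne').pow_eq_one, one_pow]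

/-- The vector of phases is not constant unless `n = 0`. -/
lemma rho_nonconst (d : ℕ) (hd : 2 ≤ d) (q : Fin d → ℕ) (hq : ∀ j, 0 < q j)
    (hco : ∀ i j : Fin d, i ≠ j → Nat.Coprime (q i) (q j)) (n : Cell d q)
    (hn : n ≠ fun j => ⟨0, hq j⟩) :
    ∃ i j, rho d q i (n i : ℕ) ≠ rho d q j (n j : ℕ) := by
  by_contra! h
  apply hn
  funext i
  haveI : Nontrivial (Fin d) := Fin.nontrivial_iff_two_le.2 hd
  obtain ⟨j, hj⟩ := exists_ne i
  have h1 := rho_pow d q hq i (n i)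
  have h2 := rho_pow d q hq j (n j)
  rw [← h i j] at h2
  have h3 : rho d q i (n i : ℕ) = 1 := by
    have ha := orderOf_dvd_of_pow_eq_one h1
    have hb := orderOf_dvd_of_pow_eq_one h2
    have := Nat.eq_one_of_dvd_coprimes (hco i j hj.symm) ha hb
    exact orderOf_eq_one_iff.1 this
  rw [rho_eq, (Complex.isPrimitiveRoot_exp (q i) (hq i).ne').pow_eq_one_iff_dvd] at h3
  exact Fin.ext (Nat.eq_zero_of_dvd_of_lt h3 (n i).2)

/-- A generic direction in the hyperplane `∑ α = 0`. -/
lemma exists_alpha (d : ℕ) {ι : Type} [Finite ι] (v : ι → Fin d → ℂ)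
    (hv : ∀ a, ∃ i j, v a i ≠ v a j) :
    ∃ α : Fin d → ℂ, ∑ j, α j = 0 ∧ ∀ a, ∑ j, v a j * α j ≠ 0 := by
  classical
  let L : (Fin d → ℂ) → ((Fin d → ℂ) →ₗ[ℂ] ℂ) := fun w => ∑ j, w j • LinearMap.proj j
  have hL : ∀ w x, L w x = ∑ j, w j * x j := by
    intro w x; simp [L]
  let K := LinearMap.ker (L 1)
  obtain ⟨x, hx⟩ := Module.Dual.exists_forall_ne_zero_of_forall_exists (K := ℂ)
    (fun a => (L (v a)).comp K.subtype) (by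
      intro a
      obtain ⟨i, j, hij⟩ := hv a
      refine ⟨⟨Pi.single i 1 - Pi.single j 1, ?_⟩, ?_⟩
      · simp [K, hL]
      · simpa [hL, mul_sub, Finset.sum_sub_distrib, Pi.single_apply, sub_eq_zero] using hij)
  refine ⟨x.1, ?_, ?_⟩
  · have h : L 1 x.1 = 0 := x.2
    rw [hL] at h
    simpa using h
  · intro a
    have := hx a
    simpa [hL] using this

lemma det_single_row {ι : Type} [Fintype ι] [DecidableEq ι] (M : Matrix ι ι ℂ) (n0 : ι)
    (h : ∀ n n', n ≠ n0 → n ≠ n' → M n n' = 0) : M.det = ∏ n, M n n := by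
  rw [Matrix.det_apply, Finset.sum_eq_single 1]
  · simp
  · intro σ _ hσ
    have : ∃ i, σ i ≠ n0 ∧ σ i ≠ i := by
      obtain ⟨i, hi⟩ : ∃ i, σ i ≠ i := by
        by_contra! hc
        exact hσ (Equiv.ext hc)
      by_cases h0 : σ i = n0
      · have h1 : σ (σ i) ≠ σ i := fun hh => hi (σ.injective hh)
        exact ⟨σ i, by rwa [← h0] , h1⟩
      · exact ⟨i, h0, hi⟩
    obtain ⟨i, hi0, hi⟩ := this
    have hz : ∏ i, M (σ i) i = 0 := Finset.prod_eq_zero (Finset.mem_univ i) (h _ _ hi0 hi)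
    rw [hz, smul_zero]
  · simp

/-- Rescaled matrix, regular at `ε = 0`; here `p = (ε, s)`. -/
def scaledMatrix (d : ℕ) (q : Fin d → ℕ) (V : (Fin d → ℤ) → ℝ) (lam : ℂ) (n0 : Cell d q)
    (α : Fin d → ℂ) (p : ℂ × ℂ) : Matrix (Cell d q) (Cell d q) ℂ := fun n n' =>
  (if n = n' then
    (if n = n0 then (d : ℂ) * p.2 else
      (∑ j, rho d q j (n j : ℕ) * α j) + p.1 * p.2 * ∑ j, rho d q j (n j : ℕ))
      + (if n = n0 then 1 else p.1) * ((∑ j, p.1 / (rho d q j (n j : ℕ) * (α j + p.2 * p.1))) - lam)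
    else 0)
  + (if n = n0 then 1 else p.1) * dft d q V (fun j => ((n j : ℕ) : ℤ) - ((n' j : ℕ) : ℤ))

lemma dft_zero (d : ℕ) (q : Fin d → ℕ) (V : (Fin d → ℤ) → ℝ) :
    dft d q V (fun _ => 0) = (potentialAvg d q V : ℂ) := by
  simp [dft, potentialAvg]

lemma scaled_zero (d : ℕ) (q : Fin d → ℕ) (V : (Fin d → ℤ) → ℝ) (lam : ℂ) (n0 : Cell d q)
    (α : Fin d → ℂ) (s : ℂ) :
    (scaledMatrix d q V lam n0 α (0, s)).det =
      (d * s - lam + potentialAvg d q V) *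
        ∏ n ∈ Finset.univ.erase n0, ∑ j, rho d q j (n j : ℕ) * α j := by
  rw [det_single_row _ n0, ← Finset.mul_prod_erase _ _ (Finset.mem_univ n0)]
  · congr 1
    · simp [scaledMatrix, dft_zero]; ring
    · apply Finset.prod_congr rfl
      intro n hn
      simp [scaledMatrix, Finset.ne_of_mem_erase hn]
  · intro n n' h h'
    simp [scaledMatrix, h, h']

lemma scaled_eq (d : ℕ) (q : Fin d → ℕ) (V : (Fin d → ℤ) → ℝ) (lam : ℂ)
    (n0 : Cell d q) (hn0 : ∀ j, (n0 j : ℕ) = 0)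
    (α : Fin d → ℂ) (hα : ∑ j, α j = 0) (p : ℂ × ℂ) (hp : p.1 ≠ 0) :
    (scaledMatrix d q V lam n0 α p).det =
      (∏ n : Cell d q, if n = n0 then 1 else p.1) *
        floquetDet d q V (fun j => (α j + p.2 * p.1) / p.1) lam := by
  unfold floquetDet
  rw [← Matrix.det_mul_column]
  congr 1
  ext n n'
  have hinv : ∀ j, (rho d q j (n j : ℕ) * ((α j + p.2 * p.1) / p.1))⁻¹
      = p.1 / (rho d q j (n j : ℕ) * (α j + p.2 * p.1)) := by
    intro j
    rw [← mul_div_assoc, inv_div]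
  have hsum : ∑ j, rho d q j (n j : ℕ) * ((α j + p.2 * p.1) / p.1)
      = (∑ j, rho d q j (n j : ℕ) * α j) / p.1 + p.2 * ∑ j, rho d q j (n j : ℕ) := by
    rw [Finset.sum_div, Finset.mul_sum, ← Finset.sum_add_distrib]
    refine Finset.sum_congr rfl fun j _ => ?_
    field_simp
  simp only [scaledMatrix, floquetMatrix, Matrix.of_apply, Matrix.sub_apply, Matrix.smul_apply,
    Matrix.one_apply, Finset.sum_add_distrib, hinv, hsum, smul_eq_mul]
  by_cases h : n = n'
  · subst h
    by_cases h0 : n = n0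
    · subst h0
      simp [hn0, rho, hα]
      ring
    · simp only [h0, if_true, if_false]
      field_simp
      ring
  · simp [h]

lemma scaled_contDiffAt (d : ℕ) (q : Fin d → ℕ) (V : (Fin d → ℤ) → ℝ) (lam : ℂ) (n0 : Cell d q)
    (α : Fin d → ℂ) (hα : ∀ j, α j ≠ 0) (s : ℂ) :
    ContDiffAt ℂ 1 (fun p => (scaledMatrix d q V lam n0 α p).det) (0, s) := by
  simp only [Matrix.det_apply']
  refine ContDiffAt.sum fun σ _ => contDiffAt_const.mul (contDiffAt_prod fun n _ => ?_)
  have key : ∀ m : Cell d q, ContDiffAt ℂ 1 (fun p : ℂ × ℂ =>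
      ∑ j, p.1 / (rho d q j (m j : ℕ) * (α j + p.2 * p.1))) (0, s) := by
    intro m
    refine ContDiffAt.sum fun j _ => ContDiffAt.div (by fun_prop) (by fun_prop) ?_
    simp [rho_ne_zero', hα]
  unfold scaledMatrix
  have := key (σ n)
  split_ifs <;> fun_prop

/-- part of Theorem 4.1: Fermi isospectral potentials have the same
average over a periodicity cell. -/
theorem fermi_isospectral_avg_eq
    (d : ℕ) (hd : 2 ≤ d)
    (q : Fin d → ℕ) (hq : ∀ j, 0 < q j)
    (hco : ∀ i j : Fin d, i ≠ j → Nat.Coprime (q i) (q j))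
    (V Y : (Fin d → ℤ) → ℝ)
    (hVper : IsPeriodicPotential d q V) (hYper : IsPeriodicPotential d q Y)
    (hFermi : FermiIsospectral d q V Y) :
    potentialAvg d q V = potentialAvg d q Y := by
  classical
  obtain ⟨lam, hF⟩ := hFermi
  haveI : Nontrivial (Fin d) := Fin.nontrivial_iff_two_le.2 hd
  let n0 : Cell d q := fun j => ⟨0, hq j⟩
  obtain ⟨α, hα0, hα⟩ := exists_alpha d
    (ι := Fin d ⊕ {n : Cell d q // n ≠ n0})
    (Sum.elim (fun i => Pi.single i 1) (fun n j => rho d q j (n.1 j : ℕ))) (by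
      rintro (i | n)
      · obtain ⟨j, hj⟩ := exists_ne i
        exact ⟨i, j, by simp [Pi.single_apply, hj]⟩
      · exact rho_nonconst d hd q hq hco n.1 n.2)
  have hα1 : ∀ j, α j ≠ 0 := by
    intro j
    simpa [Pi.single_apply] using hα (Sum.inl j)
  have hα2 : ∀ n : Cell d q, n ≠ n0 → ∑ j, rho d q j (n j : ℕ) * α j ≠ 0 :=
    fun n hn => hα (Sum.inr ⟨n, hn⟩)
  set C : ℂ := ∏ n ∈ Finset.univ.erase n0, ∑ j, rho d q j (n j : ℕ) * α j with hC
  have hC0 : C ≠ 0 := Finset.prod_ne_zero_iff.2 fun n hn => hα2 n (Finset.ne_of_mem_erase hn)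
  have hd0 : (d : ℂ) ≠ 0 := by
    have : d ≠ 0 := by omega
    exact_mod_cast this
  set s0 : ℂ := (lam - potentialAvg d q V) / d with hs0
  let gV : ℂ × ℂ → ℂ := fun p => (scaledMatrix d q V lam n0 α p).det
  let gY : ℂ × ℂ → ℂ := fun p => (scaledMatrix d q Y lam n0 α p).det
  have hgV0 : ∀ s, gV (0, s) = (d * s - lam + potentialAvg d q V) * C :=
    fun s => scaled_zero d q V lam n0 α s
  have hgY0 : ∀ s, gY (0, s) = (d * s - lam + potentialAvg d q Y) * C :=
    fun s => scaled_zero d q Y lam n0 α s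
  have hVd : HasStrictFDerivAt gV (fderiv ℂ gV (0, s0)) (0, s0) :=
    (scaled_contDiffAt d q V lam n0 α hα1 s0).hasStrictFDerivAt one_ne_zero
  have hYc : ContinuousAt gY (0, s0) := (scaled_contDiffAt d q Y lam n0 α hα1 s0).continuousAt
  set g' := fderiv ℂ gV (0, s0) with hg'
  have hg1 : g' (0, 1) = d * C := by
    have h1 : HasDerivAt (fun s : ℂ => ((0 : ℂ), s)) (0, 1) s0 :=
      (hasDerivAt_const s0 (0 : ℂ)).prodMk (hasDerivAt_id s0)
    have h2 : HasDerivAt (gV ∘ fun s : ℂ => ((0 : ℂ), s)) (g' (0, 1)) s0 :=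
      HasFDerivAt.comp_hasDerivAt s0 hVd.hasFDerivAt h1
    have h3 : HasDerivAt (gV ∘ fun s : ℂ => ((0 : ℂ), s)) (d * C) s0 := by
      have : (gV ∘ fun s : ℂ => ((0 : ℂ), s))
          = fun s => (d * s - lam + potentialAvg d q V) * C := by
        funext s; exact hgV0 s
      rw [this]
      have := ((((hasDerivAt_id s0).const_mul (d : ℂ)).sub_const lam).add_const
        (potentialAvg d q V : ℂ)).mul_const C
      simpa using this
    exact h2.unique h3
  let F : ℂ × ℂ → ℂ × ℂ := fun p => (p.1, gV p)
  have hFd : HasStrictFDerivAt F ((ContinuousLinearMap.fst ℂ ℂ ℂ).prod g') (0, s0) :=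
    hasStrictFDerivAt_fst.prodMk hVd
  have hsurj : ((ContinuousLinearMap.fst ℂ ℂ ℂ).prod g').range = ⊤ := by
    rw [LinearMap.range_eq_top]
    rintro ⟨a, b⟩
    refine ⟨(a, 0) + ((b - g' (a, 0)) / (d * C)) • (0, 1), ?_⟩
    have : g' ((a, 0) + ((b - g' (a, 0)) / (d * C)) • (0, 1)) = b := by
      rw [map_add, map_smul, hg1, smul_eq_mul, div_mul_cancel₀ _ (mul_ne_zero hd0 hC0)]
      ring
    exact Prod.ext (by simp) this
  have hmap := hFd.map_nhds_eq_of_surj hsurj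
  have hF0 : F (0, s0) = (0, 0) := by
    have : gV (0, s0) = 0 := by
      rw [hgV0, hs0, mul_div_cancel₀ _ hd0]; ring
    simp [F, this]
  by_contra hne
  have hY0 : gY (0, s0) ≠ 0 := by
    rw [hgY0, hs0, mul_div_cancel₀ _ hd0]
    refine mul_ne_zero ?_ hC0
    intro h
    apply hne
    have : (potentialAvg d q V : ℂ) = potentialAvg d q Y := by linear_combination -h
    exact_mod_cast this
  have hev1 : ∀ᶠ p in nhds ((0 : ℂ), s0), gY p ≠ 0 := hYc.eventually_ne hY0
  have hev2 : ∀ᶠ p in nhds ((0 : ℂ), s0), ∀ j, α j + p.2 * p.1 ≠ 0 := by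
    rw [Filter.eventually_all]
    intro j
    have hc : ContinuousAt (fun p : ℂ × ℂ => α j + p.2 * p.1) (0, s0) := by fun_prop
    exact hc.eventually_ne (by simpa using hα1 j)
  have himg := Filter.image_mem_map (m := F) (hev1.and hev2)
  rw [hmap, hF0] at himg
  have hline : Filter.Tendsto (fun e : ℂ => (e, (0 : ℂ))) (nhdsWithin 0 {0}ᶜ) (nhds (0, 0)) := by
    have : ContinuousAt (fun e : ℂ => (e, (0 : ℂ))) 0 := by fun_prop
    exact this.tendsto.mono_left nhdsWithin_le_nhds
  obtain ⟨e, ⟨p, ⟨hp1, hp2⟩, hpe⟩, he⟩ :=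
    ((hline.eventually himg).and self_mem_nhdsWithin).exists
  have hpe1 : p.1 = e := congrArg Prod.fst hpe
  have hpe2 : gV p = 0 := congrArg Prod.snd hpe
  have hp0 : p.1 ≠ 0 := by rw [hpe1]; exact he
  have eV := scaled_eq d q V lam n0 (fun _ => rfl) α hα0 p hp0
  have eY := scaled_eq d q Y lam n0 (fun _ => rfl) α hα0 p hp0
  have hprod : (∏ n : Cell d q, if n = n0 then (1 : ℂ) else p.1) ≠ 0 := by
    refine Finset.prod_ne_zero_iff.2 fun n _ => ?_
    split_ifs
    · exact one_ne_zero
    · exact hp0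
  have hVz : floquetDet d q V (fun j => (α j + p.2 * p.1) / p.1) lam = 0 := by
    have h : gV p = _ := eV
    rw [hpe2] at h
    exact (mul_eq_zero.1 h.symm).resolve_left hprod
  have hmem : (fun j => (α j + p.2 * p.1) / p.1) ∈
      {z : Fin d → ℂ | (∀ j, z j ≠ 0) ∧ floquetDet d q V z lam = 0} :=
    ⟨fun j => div_ne_zero (hp2 j) hp0, hVz⟩
  rw [hF] at hmem
  apply hp1
  change (scaledMatrix d q Y lam n0 α p).det = 0
  rw [eY, hmem.2, mul_zero]

end
end
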